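/- For every δ > 0 there is a threshold n₀ = n₀(δ) such that the following holds for all n ≥ n₀. Let A, B, C ⊆ ℝ² be mutually avoiding sets of n points each, and let T be ANY set of collinear triples (a,b,c) with a ∈ A, b ∈ B, c ∈ C (i.e., T is an arbitrary subset of the set of all such collinear triples). If |T| ≥ δn², then T contains a tic-tac-toe configuration whose six triples all belong to T. -/

import Mathlib

/-!
The proof reduces to a statement about ordered index sets and applies the Ruzsa–Szemerédi theorem
at two scales.

*Geometry.* Any two points of a collinear triple determine the third (`eq_of_collinear`), since a
line through two points of one set misses the others. After passing to a third of `T`, all triples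
have their middle point in the same set. The angular orders of the three sets, seen from each other,
are well defined, and with suitable orientations no two triples of `T` are strictly increasing in all
three coordinates (`no_chain`, `exists_ranks`): otherwise three points on a line would lie on
alternating sides of another line.

*Combinatorics* (`combinatorial_core`). Index the three sets by `0, …, n - 1` in these orders and
cut each into `K` intervals of a large constant length `w`. The absence of strictly increasing pairs
means that `T` meets at most `4 * K ^ 2` cells (`card_blocks_le`), so a positive proportion of
`K ^ 2` cells is dense. By the Ruzsa–Szemerédi theorem (`exists_accidental`, from the triangle
removal lemma), each dense cell contains an accidental triangle: triples `(a', b, c)`, `(a, b', c)`,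
`(a, b, c')` with `a ≠ a'`, `b ≠ b'`, `c ≠ c'`. There are at most `w ^ 6` possible positions for it
inside its cell, so one position occurs in a positive proportion of `K ^ 2` cells. Two coordinates of
such a cell determine the third, so the theorem applies again, to these cells, and gives an
accidental triangle of cells. Each of its three cells holds three triples of `T` at the same
positions; two suitably chosen from each cell make up a tic-tac-toe configuration.
-/

/-- Points of the Euclidean plane. -/
abbrev Pt : Type := ℝ × ℝ

/-- The line through two points, as a set. -/
def lineThrough (p q : Pt) : Set Pt :=
  (affineSpan ℝ ({p, q} : Set Pt) : AffineSubspace ℝ Pt)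

/-- Every line through two distinct points of `P` is disjoint from the convex hull of `Q`. -/
def AvoidsHull (P Q : Finset Pt) : Prop :=
  ∀ p ∈ P, ∀ q ∈ P, p ≠ q → Disjoint (lineThrough p q) (convexHull ℝ (Q : Set Pt))

/-- Three finite point sets are mutually avoiding. -/
def MutuallyAvoiding (P Q S : Finset Pt) : Prop :=
  AvoidsHull P Q ∧ AvoidsHull P S ∧ AvoidsHull Q P ∧ AvoidsHull Q S ∧
    AvoidsHull S P ∧ AvoidsHull S Q

/-- A tic-tac-toe configuration in a set `T ⊆ A × B × C` of triples: nine pairwise distinct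
points `p i j`, with `p i j` in `A`, `B`, `C` according as `i + j ≡ 0, 1, 2 (mod 3)`, such that
every row and every column gives (suitably ordered) a triple of `T`. -/
def IsTicTacToe (A B C : Finset Pt) (T : Set (Pt × Pt × Pt)) (p : Fin 3 → Fin 3 → Pt) : Prop :=
  (∀ i j i' j' : Fin 3, p i j = p i' j' → i = i' ∧ j = j') ∧
  (∀ i j : Fin 3,
    (i + j = 0 → p i j ∈ A) ∧ (i + j = 1 → p i j ∈ B) ∧ (i + j = 2 → p i j ∈ C)) ∧
  (∀ i : Fin 3, (p i (0 - i), p i (1 - i), p i (2 - i)) ∈ T) ∧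
  (∀ j : Fin 3, (p (0 - j) j, p (1 - j) j, p (2 - j) j) ∈ T)

/-! ### The Ruzsa–Szemerédi theorem -/

open Finset SimpleGraph TripartiteFromTriangles in
/-- The Ruzsa–Szemerédi theorem: a dense set of triples in which any two coordinates determine the
third contains three triples that pairwise share one coordinate, a different one for each pair. If
there were none, the graph formed by the triples would have only `#T ≤ N ^ 2` triangles while being
far from triangle-free, against the triangle removal lemma. -/
theorem exists_accidental (ε : ℝ) (hε : 0 < ε) : ∃ N₀ : ℕ, ∀ N : ℕ, N₀ ≤ N →
    ∀ T : Finset (ℕ × ℕ × ℕ), ExplicitDisjoint T →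
      (∀ a b c, (a, b, c) ∈ T → a < N ∧ b < N ∧ c < N) → ε * (N : ℝ) ^ 2 ≤ (#T : ℝ) →
      ∃ a a' b b' c c', (a', b, c) ∈ T ∧ (a, b', c) ∈ T ∧ (a, b, c') ∈ T ∧
        a ≠ a' ∧ b ≠ b' ∧ c ≠ c' := by
  have hκ : 0 < triangleRemovalBound (ε / 9) := triangleRemovalBound_pos (by positivity)
  obtain ⟨N₀, hN₀⟩ := exists_nat_gt (triangleRemovalBound (ε / 9) * 27)⁻¹
  refine ⟨N₀ + 1, fun N hN T hT hlt hcard => ?_⟩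
  by_contra hno
  push Not at hno
  let e : Fin N × Fin N × Fin N ↪ ℕ × ℕ × ℕ :=
    Fin.valEmbedding.prodMap (Fin.valEmbedding.prodMap Fin.valEmbedding)
  let t : Finset (Fin N × Fin N × Fin N) := univ.filter fun x => e x ∈ T
  have hmem : ∀ x y z, (x, y, z) ∈ t ↔ ((x : ℕ), (y : ℕ), (z : ℕ)) ∈ T := by
    intro x y z; simp [t, e]
  have hmap : t.map e = T := by
    ext ⟨a, b, c⟩
    simp only [mem_map, Prod.exists]
    constructor
    · rintro ⟨x, y, z, h, h'⟩
      rw [← h']; exact (hmem x y z).1 h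
    · intro h
      obtain ⟨ha, hb, hc⟩ := hlt a b c h
      exact ⟨⟨a, ha⟩, ⟨b, hb⟩, ⟨c, hc⟩, (hmem _ _ _).2 h, rfl⟩
  have hct : #t = #T := by rw [← hmap, card_map]
  have : ExplicitDisjoint t :=
    ⟨fun a b c a' h h' => Fin.ext (hT.inj₀ ((hmem _ _ _).1 h) ((hmem _ _ _).1 h')),
     fun a b c a' h h' => Fin.ext (hT.inj₁ ((hmem _ _ _).1 h) ((hmem _ _ _).1 h')),
     fun a b c a' h h' => Fin.ext (hT.inj₂ ((hmem _ _ _).1 h) ((hmem _ _ _).1 h'))⟩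
  have : NoAccidental t := ⟨fun a a' b b' c c' h₁ h₂ h₃ => by
    by_contra hcon
    push Not at hcon
    exact hcon.2.2 (Fin.ext (hno a a' b b' c c' ((hmem _ _ _).1 h₁) ((hmem _ _ _).1 h₂)
      ((hmem _ _ _).1 h₃) (fun h => hcon.1 (Fin.ext h)) (fun h => hcon.2.1 (Fin.ext h))))⟩
  have hfar : (graph t).FarFromTriangleFree (ε / 9) := by
    apply farFromTriangleFree
    rw [hct]
    refine le_trans (le_of_eq ?_) hcard
    simp only [Fintype.card_fin]
    push_cast
    ring
  have h₁ := hfar.le_card_cliqueFinset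
  rw [card_triangles] at h₁
  -- the triangles of `t` are determined by two of their vertices
  have h₂ : #t ≤ N ^ 2 := by
    have : #t ≤ #(univ : Finset (Fin N × Fin N)) := by
      refine card_le_card_of_injOn (fun x => (x.1, x.2.1)) (fun _ _ => mem_coe.2 (mem_univ _)) ?_
      rintro ⟨a, b, c⟩ h ⟨a', b', c'⟩ h' heq
      simp only [Prod.mk.injEq] at heq
      obtain ⟨rfl, rfl⟩ := heq
      rw [ExplicitDisjoint.inj₂ (mem_coe.1 h) (mem_coe.1 h')]
    simpa [sq] using this
  have h₃ : (#t : ℝ) ≤ (N : ℝ) ^ 2 := by exact_mod_cast h₂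
  have hN' : (N₀ : ℝ) + 1 ≤ N := by exact_mod_cast hN
  have h₄ : 1 < triangleRemovalBound (ε / 9) * 27 * N := by
    rw [← inv_lt_iff_one_lt_mul₀' (by positivity)]
    linarith
  simp only [Fintype.card_sum, Fintype.card_fin] at h₁
  push_cast at h₁
  have hNpos : (0 : ℝ) < N := by
    have : (0 : ℝ) ≤ N₀ := by positivity
    linarith
  have : triangleRemovalBound (ε / 9) * 27 * N * (N : ℝ) ^ 2 ≤ 1 * (N : ℝ) ^ 2 := by
    calc _ = triangleRemovalBound (ε / 9) * ((N : ℝ) + (N + N)) ^ 3 := by ring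
      _ ≤ _ := by linarith
  exact absurd (le_of_mul_le_mul_right this (by positivity)) (not_le.2 h₄)

/-! ### Grids in ordered triple systems -/

/-- The nine points and six triples of a tic-tac-toe configuration, for abstract triples. The grid with
rows `a₀ b₀ c₀`, `b₁ c₁ a₁`, `c₂ a₂ b₂` has the first three triples as its rows and the last three
as its columns. Distinctness is only required within each coordinate. -/
def HasGrid {α : Type*} (T : Finset (α × α × α)) : Prop :=
  ∃ a₀ a₁ a₂ b₀ b₁ b₂ c₀ c₁ c₂ : α,
    ((a₀, b₀, c₀) ∈ T ∧ (a₁, b₁, c₁) ∈ T ∧ (a₂, b₂, c₂) ∈ T ∧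
      (a₀, b₁, c₂) ∈ T ∧ (a₂, b₀, c₁) ∈ T ∧ (a₁, b₂, c₀) ∈ T) ∧
    (a₀ ≠ a₁ ∧ a₀ ≠ a₂ ∧ a₁ ≠ a₂) ∧ (b₀ ≠ b₁ ∧ b₀ ≠ b₂ ∧ b₁ ≠ b₂) ∧
    (c₀ ≠ c₁ ∧ c₀ ≠ c₂ ∧ c₁ ≠ c₂)

/-- The cell containing the triple `t` when each axis is cut into intervals of length `w`. -/
def blockOf (w : ℕ) (t : ℕ × ℕ × ℕ) : ℕ × ℕ × ℕ := (t.1 / w, t.2.1 / w, t.2.2 / w)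

/-- The position of the triple `t` inside its cell of side `w`. -/
def posOf (w : ℕ) (t : ℕ × ℕ × ℕ) : ℕ × ℕ × ℕ := (t.1 % w, t.2.1 % w, t.2.2 % w)

/-- The cell `s` of side `w` contains an accidental triangle of `T` at the position `q`: writing
`q = ((a, b, c), (a', b', c'))`, the triples at positions `(a', b, c)`, `(a, b', c)`, `(a, b, c')`
inside `s` belong to `T`, and `a ≠ a'`, `b ≠ b'`, `c ≠ c'`. -/
def HasPattern (T : Finset (ℕ × ℕ × ℕ)) (w : ℕ) (s : ℕ × ℕ × ℕ) (q : (ℕ × ℕ × ℕ) × ℕ × ℕ × ℕ) :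
    Prop :=
  (w * s.1 + q.2.1, w * s.2.1 + q.1.2.1, w * s.2.2 + q.1.2.2) ∈ T ∧
  (w * s.1 + q.1.1, w * s.2.1 + q.2.2.1, w * s.2.2 + q.1.2.2) ∈ T ∧
  (w * s.1 + q.1.1, w * s.2.1 + q.1.2.1, w * s.2.2 + q.2.2.2) ∈ T ∧
  q.1.1 ≠ q.2.1 ∧ q.1.2.1 ≠ q.2.2.1 ∧ q.1.2.2 ≠ q.2.2.2

open Finset SimpleGraph TripartiteFromTriangles in
/-- A family without strictly increasing pairs meets at most `4 * K ^ 2` of the `K ^ 3` cells: it meets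
each diagonal `{(i + s, j + s, l + s)}` of cells at most once. -/
theorem card_blocks_le {T : Finset (ℕ × ℕ × ℕ)} {w K : ℕ}
    (hlt : ∀ s ∈ T.image (blockOf w), s.1 < K ∧ s.2.1 < K ∧ s.2.2 < K)
    (hchain : ∀ t ∈ T, ∀ t' ∈ T, ¬ (t.1 < t'.1 ∧ t.2.1 < t'.2.1 ∧ t.2.2 < t'.2.2)) :
    #(T.image (blockOf w)) ≤ 4 * K ^ 2 := by
  have hno : ∀ s ∈ T.image (blockOf w), ∀ s' ∈ T.image (blockOf w),
      ¬ (s.1 < s'.1 ∧ s.2.1 < s'.2.1 ∧ s.2.2 < s'.2.2) := by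
    intro s hs s' hs' h
    obtain ⟨t, ht, rfl⟩ := mem_image.1 hs
    obtain ⟨t', ht', rfl⟩ := mem_image.1 hs'
    exact hchain t ht t' ht' ⟨Nat.lt_of_div_lt_div h.1, Nat.lt_of_div_lt_div h.2.1,
      Nat.lt_of_div_lt_div h.2.2⟩
  have : #(T.image (blockOf w)) ≤ #(range (2 * K) ×ˢ range (2 * K)) := by
    refine card_le_card_of_injOn (fun s => (s.1 + K - s.2.2, s.2.1 + K - s.2.2)) ?_ ?_
    · intro s hs
      have := hlt s hs
      simp only [coe_product, Set.mem_prod, coe_range, Set.mem_Iio]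
      omega
    · rintro ⟨i, j, l⟩ hs ⟨i', j', l'⟩ hs' heq
      have h₁ := hlt _ hs
      have h₂ := hlt _ hs'
      have h₃ := hno _ hs _ hs'
      have h₄ := hno _ hs' _ hs
      simp only [Prod.mk.injEq] at heq h₁ h₂ h₃ h₄ ⊢
      omega
  refine this.trans (le_of_eq ?_)
  rw [card_product, card_range]; ring

open Finset SimpleGraph TripartiteFromTriangles in
theorem card_block_le {T : Finset (ℕ × ℕ × ℕ)} (hT : ExplicitDisjoint T) {w : ℕ} (hw : 0 < w)
    (s : ℕ × ℕ × ℕ) : #(T.filter fun t => blockOf w t = s) ≤ w ^ 2 := by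
  have : #(T.filter fun t => blockOf w t = s) ≤ #(range w ×ˢ range w) := by
    refine card_le_card_of_injOn (fun t => (t.1 % w, t.2.1 % w)) ?_ ?_
    · intro t _
      simp [Nat.mod_lt _ hw]
    · rintro ⟨a, b, c⟩ h ⟨a', b', c'⟩ h' heq
      replace h := mem_filter.1 (mem_coe.1 h)
      replace h' := mem_filter.1 (mem_coe.1 h')
      have h₁ := h.2.trans h'.2.symm
      simp only [blockOf, Prod.mk.injEq] at heq h₁
      have ha : a = a' := by rw [← Nat.div_add_mod a w, ← Nat.div_add_mod a' w, h₁.1, heq.1]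
      have hb : b = b' := by rw [← Nat.div_add_mod b w, ← Nat.div_add_mod b' w, h₁.2.1, heq.2]
      subst ha hb
      rw [hT.inj₂ h.1 h'.1]
  refine this.trans (le_of_eq ?_)
  rw [card_product, card_range]; ring

open Finset SimpleGraph TripartiteFromTriangles in
/-- A dense cell contains an accidental triangle. -/
theorem exists_pattern {η : ℝ} {w : ℕ} (hw : 0 < w)
    (hRS : ∀ T : Finset (ℕ × ℕ × ℕ), ExplicitDisjoint T →
      (∀ a b c, (a, b, c) ∈ T → a < w ∧ b < w ∧ c < w) → η * (w : ℝ) ^ 2 ≤ (#T : ℝ) →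
      ∃ a a' b b' c c', (a', b, c) ∈ T ∧ (a, b', c) ∈ T ∧ (a, b, c') ∈ T ∧
        a ≠ a' ∧ b ≠ b' ∧ c ≠ c')
    {T : Finset (ℕ × ℕ × ℕ)} (hT : ExplicitDisjoint T) (s : ℕ × ℕ × ℕ)
    (hs : η * (w : ℝ) ^ 2 ≤ (#(T.filter fun t => blockOf w t = s) : ℝ)) :
    ∃ q ∈ (range w ×ˢ range w ×ˢ range w) ×ˢ (range w ×ˢ range w ×ˢ range w),
      HasPattern T w s q := by
  set F := T.filter fun t => blockOf w t = s with hF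
  have hmem : ∀ x y z, (x, y, z) ∈ F.image (posOf w) →
      (w * s.1 + x, w * s.2.1 + y, w * s.2.2 + z) ∈ T ∧ x < w ∧ y < w ∧ z < w := by
    intro x y z h
    obtain ⟨⟨a, b, c⟩, ht, hp⟩ := mem_image.1 h
    obtain ⟨htT, rfl⟩ := mem_filter.1 ht
    simp only [posOf, Prod.mk.injEq] at hp
    obtain ⟨rfl, rfl, rfl⟩ := hp
    simp only [blockOf, Nat.div_add_mod]
    exact ⟨htT, Nat.mod_lt _ hw, Nat.mod_lt _ hw, Nat.mod_lt _ hw⟩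
  have hinj : Set.InjOn (posOf w) F := by
    rintro ⟨a, b, c⟩ h ⟨a', b', c'⟩ h' heq
    have h₁ := (mem_filter.1 (mem_coe.1 h)).2.trans (mem_filter.1 (mem_coe.1 h')).2.symm
    simp only [posOf, blockOf, Prod.mk.injEq] at heq h₁ ⊢
    refine ⟨?_, ?_, ?_⟩
    · rw [← Nat.div_add_mod a w, ← Nat.div_add_mod a' w, h₁.1, heq.1]
    · rw [← Nat.div_add_mod b w, ← Nat.div_add_mod b' w, h₁.2.1, heq.2.1]
    · rw [← Nat.div_add_mod c w, ← Nat.div_add_mod c' w, h₁.2.2, heq.2.2]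
  obtain ⟨a, a', b, b', c, c', h₁, h₂, h₃, hne⟩ := hRS (F.image (posOf w))
    ⟨fun _ _ _ _ h h' => Nat.add_left_cancel (hT.inj₀ (hmem _ _ _ h).1 (hmem _ _ _ h').1),
     fun _ _ _ _ h h' => Nat.add_left_cancel (hT.inj₁ (hmem _ _ _ h).1 (hmem _ _ _ h').1),
     fun _ _ _ _ h h' => Nat.add_left_cancel (hT.inj₂ (hmem _ _ _ h).1 (hmem _ _ _ h').1)⟩
    (fun a b c h => (hmem a b c h).2) (by rwa [card_image_of_injOn hinj])
  refine ⟨((a, b, c), (a', b', c')), ?_, (hmem _ _ _ h₁).1, (hmem _ _ _ h₂).1,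
    (hmem _ _ _ h₃).1, hne⟩
  have := hmem _ _ _ h₁
  have := hmem _ _ _ h₂
  have := hmem _ _ _ h₃
  simp only [mem_product, mem_range]
  tauto

open Finset SimpleGraph TripartiteFromTriangles in
/-- Dense families of integer triples without strictly increasing pairs, in which any two coordinates
determine the third, contain a grid. -/
theorem combinatorial_core (δ : ℝ) (hδ : 0 < δ) : ∃ n₀ : ℕ, ∀ n : ℕ, n₀ ≤ n →
    ∀ T : Finset (ℕ × ℕ × ℕ), ExplicitDisjoint T →
      (∀ t ∈ T, t.1 < n ∧ t.2.1 < n ∧ t.2.2 < n) →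
      (∀ t ∈ T, ∀ t' ∈ T, ¬ (t.1 < t'.1 ∧ t.2.1 < t'.2.1 ∧ t.2.2 < t'.2.2)) →
      δ * (n : ℝ) ^ 2 ≤ (#T : ℝ) →
      HasGrid T := by
  classical
  obtain ⟨w₀, hw₀⟩ := exists_accidental (δ / 32) (by positivity)
  set w := w₀ + 1 with hwdef
  have hw : 0 < w := by omega
  have hwR : (0 : ℝ) < w := by exact_mod_cast hw
  obtain ⟨K₀, hK₀⟩ := exists_accidental (δ / (8 * (w : ℝ) ^ 6)) (by positivity)
  refine ⟨w * K₀ + w, fun n hn T hT hlt hchain hcard => ?_⟩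
  set K := n / w + 1 with hK
  have hKK₀ : K₀ ≤ K := by
    have : K₀ ≤ n / w := (Nat.le_div_iff_mul_le hw).2 (by nlinarith)
    omega
  have hKn : K * w ≤ 2 * n := by
    have := Nat.div_mul_le_self n w
    nlinarith
  have hKnR : (K : ℝ) * w ≤ 2 * n := by exact_mod_cast hKn
  have hsq : ((K : ℝ) * w) ^ 2 ≤ (2 * n) ^ 2 := by gcongr
  set S := T.image (blockOf w) with hS
  have hSlt : ∀ s ∈ S, s.1 < K ∧ s.2.1 < K ∧ s.2.2 < K := by
    intro s hs
    obtain ⟨t, ht, rfl⟩ := mem_image.1 hs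
    obtain ⟨h₁, h₂, h₃⟩ := hlt t ht
    exact ⟨Nat.lt_succ_of_le (Nat.div_le_div_right h₁.le),
      Nat.lt_succ_of_le (Nat.div_le_div_right h₂.le),
      Nat.lt_succ_of_le (Nat.div_le_div_right h₃.le)⟩
  have hSc : (#S : ℝ) ≤ 4 * (K : ℝ) ^ 2 := by
    exact_mod_cast card_blocks_le hSlt hchain
  -- `D` is the set of dense cells; the others together hold at most half of `T`
  let D := S.filter fun s => δ / 32 * (w : ℝ) ^ 2 ≤ (#(T.filter fun t => blockOf w t = s) : ℝ)
  have hTsum : (#T : ℝ) ≤ #D * (w : ℝ) ^ 2 + #S * (δ / 32 * (w : ℝ) ^ 2) := by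
    have h₁ : #T = ∑ s ∈ S, #(T.filter fun t => blockOf w t = s) :=
      card_eq_sum_card_image _ _
    have h₂ : (#D : ℝ) * (w : ℝ) ^ 2 = ∑ s ∈ S,
        if δ / 32 * (w : ℝ) ^ 2 ≤ (#(T.filter fun t => blockOf w t = s) : ℝ)
          then (w : ℝ) ^ 2 else 0 := by
      rw [← sum_filter, sum_const, nsmul_eq_mul]
    have h₃ : (#S : ℝ) * (δ / 32 * (w : ℝ) ^ 2) = ∑ s ∈ S, (δ / 32 * (w : ℝ) ^ 2) := by
      rw [sum_const, nsmul_eq_mul]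
    rw [h₁, h₂, h₃, ← sum_add_distrib]
    push_cast
    refine sum_le_sum fun s _ => ?_
    split_ifs with h
    · have : (#(T.filter fun t => blockOf w t = s) : ℝ) ≤ (w : ℝ) ^ 2 := by
        exact_mod_cast card_block_le hT hw s
      have : 0 ≤ δ / 32 * (w : ℝ) ^ 2 := by positivity
      linarith
    · push Not at h
      linarith
  have hD : δ / 8 * (K : ℝ) ^ 2 ≤ #D := by
    have h₁ : (#S : ℝ) * (δ / 32 * (w : ℝ) ^ 2) ≤ 4 * (K : ℝ) ^ 2 * (δ / 32 * (w : ℝ) ^ 2) := by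
      gcongr
    have h₂ : δ / 8 * ((K : ℝ) * w) ^ 2 ≤ δ / 8 * (2 * n) ^ 2 := by gcongr
    have h₃ : δ / 8 * (K : ℝ) ^ 2 * (w : ℝ) ^ 2 ≤ #D * (w : ℝ) ^ 2 := by
      nlinarith
    exact le_of_mul_le_mul_right h₃ (by positivity)
  have hpat : ∀ s ∈ D, ∃ q ∈ (range w ×ˢ range w ×ˢ range w) ×ˢ (range w ×ˢ range w ×ˢ range w),
      HasPattern T w s q := fun s hs =>
    exists_pattern hw (hw₀ w (by omega)) hT s (mem_filter.1 hs).2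
  choose! g hg hgP using hpat
  obtain ⟨q, -, hq⟩ := exists_le_card_fiber_of_nsmul_le_card_of_maps_to
    (s := D) (f := g) (b := δ / (8 * (w : ℝ) ^ 6) * (K : ℝ) ^ 2) hg
    ⟨((0, 0, 0), (0, 0, 0)), by simp [hw]⟩ (by
      simp only [card_product, card_range, nsmul_eq_mul]
      push_cast
      refine le_trans (le_of_eq ?_) hD
      field_simp)
  -- `M` is the set of cells sharing the most popular position `q` of an accidental triangle
  set M := D.filter fun s => g s = q with hM
  have hMP : ∀ s ∈ M, HasPattern T w s q := by
    intro s hs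
    obtain ⟨h₁, rfl⟩ := mem_filter.1 hs
    exact hgP s h₁
  have hcancel : ∀ {i i' x : ℕ}, w * i + x = w * i' + x → i = i' := by
    intro i i' x h
    exact Nat.eq_of_mul_eq_mul_left hw (Nat.add_right_cancel h)
  -- two coordinates of a cell in `M` determine the third, because a triple of `T` sits at the same
  -- position in every such cell
  have hMdisj : ExplicitDisjoint M :=
    ⟨fun _ _ _ _ h h' => hcancel (hT.inj₀ (hMP _ h).1 (hMP _ h').1),
     fun _ _ _ _ h h' => hcancel (hT.inj₁ (hMP _ h).1 (hMP _ h').1),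
     fun _ _ _ _ h h' => hcancel (hT.inj₂ (hMP _ h).1 (hMP _ h').1)⟩
  obtain ⟨I, I', J, J', L, L', h₁, h₂, h₃, hI, hJ, hL⟩ := hK₀ K hKK₀ M hMdisj
    (fun a b c h => hSlt _ (mem_filter.1 (mem_filter.1 h).1).1) hq
  have hne : ∀ {i i' x x' : ℕ}, x < w → x' < w → i ≠ i' → w * i + x ≠ w * i' + x' := by
    intro i i' x x' hx hx' hi h
    apply hi
    have := congrArg (· / w) h
    simpa [Nat.mul_add_div hw, Nat.div_eq_of_lt hx, Nat.div_eq_of_lt hx'] using this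
  have hqw : q ∈ (range w ×ˢ range w ×ˢ range w) ×ˢ (range w ×ˢ range w ×ˢ range w) := by
    obtain ⟨h, rfl⟩ := mem_filter.1 h₁
    exact hg _ h
  obtain ⟨⟨a, b, c⟩, a', b', c'⟩ := q
  simp only [mem_product, mem_range] at hqw
  obtain ⟨⟨hwa, hwb, hwc⟩, hwa', hwb', hwc'⟩ := hqw
  obtain ⟨u₁, u₂, u₃, -⟩ := hMP _ h₁
  obtain ⟨v₁, v₂, v₃, -⟩ := hMP _ h₂
  obtain ⟨x₁, x₂, x₃, ha, hb, hc⟩ := hMP _ h₃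
  dsimp only at u₁ u₂ u₃ v₁ v₂ v₃ x₁ x₂ x₃ ha hb hc
  -- an accidental triangle of cells, each carrying the same accidental triangle, yields the grid:
  -- every cell of the triangle supplies two of its six triples
  refine ⟨w * I + a, w * I + a', w * I' + a, w * J + b', w * J' + b, w * J + b,
    w * L' + c, w * L + c, w * L + c', ⟨x₂, v₁, u₃, v₃, u₂, x₁⟩,
    ⟨?_, hne hwa hwa hI, hne hwa' hwa hI⟩, ⟨hne hwb' hwb hJ, ?_, hne hwb hwb hJ.symm⟩,
    ⟨hne hwc hwc hL.symm, hne hwc hwc' hL.symm, ?_⟩⟩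
  · omega
  · omega
  · omega

/-! ### Angular orders of avoiding sets -/

/-- Twice the signed area of the triangle `p q r`; positive iff `p, q, r` turn counterclockwise. -/
def orient (p q r : Pt) : ℝ := (q.1 - p.1) * (r.2 - p.2) - (q.2 - p.2) * (r.1 - p.1)

theorem mem_lineThrough_of_orient {p q r : Pt} (hpq : p ≠ q) (h : orient p q r = 0) :
    r ∈ lineThrough p q := by
  unfold orient at h
  obtain ⟨s, hs⟩ : ∃ s : ℝ, r = AffineMap.lineMap p q s := by
    by_cases h1 : q.1 - p.1 = 0
    · have h2 : q.2 - p.2 ≠ 0 := fun h2 => hpq (Prod.ext (by linarith) (by linarith))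
      refine ⟨(r.2 - p.2) / (q.2 - p.2), ?_⟩
      have h3 : r.1 - p.1 = 0 := by
        rw [h1] at h
        have : (q.2 - p.2) * (r.1 - p.1) = 0 := by linarith
        exact (mul_eq_zero.1 this).resolve_left h2
      ext
      · simp [AffineMap.lineMap_apply, h1]; linarith
      · simp [AffineMap.lineMap_apply]; field_simp; ring
    · refine ⟨(r.1 - p.1) / (q.1 - p.1), ?_⟩
      ext
      · simp [AffineMap.lineMap_apply]; field_simp; ring
      · simp [AffineMap.lineMap_apply]; field_simp; linarith
  rw [hs]
  exact AffineMap.lineMap_mem_affineSpan_pair s p q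

theorem orient_ne_zero {P Q : Finset Pt} (h : AvoidsHull P Q) {p q r : Pt} (hp : p ∈ P)
    (hq : q ∈ P) (hpq : p ≠ q) (hr : r ∈ convexHull ℝ (Q : Set Pt)) : orient p q r ≠ 0 := fun h0 =>
  Set.disjoint_left.1 (h p hp q hq hpq) (mem_lineThrough_of_orient hpq h0) hr

/-- A line through two points of `P` has all of `Q` on the same side. -/
theorem orient_pos_of_pos {P Q : Finset Pt} (h : AvoidsHull P Q) {p q r r' : Pt} (hp : p ∈ P)
    (hq : q ∈ P) (hr : r ∈ Q) (hr' : r' ∈ Q) (hpos : 0 < orient p q r) : 0 < orient p q r' := by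
  have hpq : p ≠ q := by
    rintro rfl
    simp [orient] at hpos
  by_contra hneg
  push Not at hneg
  have hd : 0 < orient p q r - orient p q r' := by linarith
  set s := orient p q r / (orient p q r - orient p q r') with hs
  have hs0 : 0 ≤ s := by positivity
  have hs1 : s ≤ 1 := by rw [hs, div_le_one hd]; linarith
  have hmem : (1 - s) • r + s • r' ∈ convexHull ℝ (Q : Set Pt) :=
    convex_convexHull ℝ _ (subset_convexHull ℝ _ hr) (subset_convexHull ℝ _ hr')
      (by linarith) hs0 (by ring)
  refine orient_ne_zero h hp hq hpq hmem ?_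
  have hlin : orient p q ((1 - s) • r + s • r') = (1 - s) * orient p q r + s * orient p q r' := by
    simp only [orient, Prod.fst_add, Prod.snd_add, Prod.smul_fst, Prod.smul_snd, smul_eq_mul]
    ring
  rw [hlin, hs]
  field_simp
  ring

theorem not_mem_convexHull {P Q : Finset Pt} (h : AvoidsHull Q P) (hQ : 1 < Q.card) {b : Pt}
    (hb : b ∈ Q) : b ∉ convexHull ℝ (P : Set Pt) := by
  obtain ⟨b', hb', hne⟩ := Finset.exists_mem_ne hQ b
  refine Set.disjoint_left.1 (h b hb b' hb' hne.symm) ?_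
  exact left_mem_affineSpan_pair ℝ _ _

/-- Seen from a point `b` of `Q`, the counterclockwise relation on `P` is transitive: a cyclic triple
would put `b` inside the triangle `x y z`, with barycentric coordinates given by the three signed
areas, whereas `b` lies outside the convex hull of `P`. -/
theorem orient_trans {P Q : Finset Pt} (hQP : AvoidsHull Q P)
    (hQ : 1 < Q.card) {x y z b : Pt} (hx : x ∈ P) (hy : y ∈ P) (hz : z ∈ P) (hb : b ∈ Q)
    (hxy : 0 < orient x y b) (hyz : 0 < orient y z b) : 0 < orient x z b := by
  by_contra hneg
  push Not at hneg
  have hzx : 0 ≤ orient z x b := by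
    have : orient z x b = - orient x z b := by unfold orient; ring
    linarith
  set s := orient x y b + orient y z b + orient z x b with hs
  have hspos : 0 < s := by positivity
  apply not_mem_convexHull hQP hQ hb
  have hmem : (orient y z b / s) • x + (orient z x b / s) • y + (orient x y b / s) • z ∈
      convexHull ℝ (P : Set Pt) := by
    have := (convex_convexHull ℝ (P : Set Pt)).sum_mem (t := Finset.univ)
      (w := ![orient y z b / s, orient z x b / s, orient x y b / s]) (z := ![x, y, z])
      (by
        intro i _
        fin_cases i
        · exact (div_pos hyz hspos).le
        · exact div_nonneg hzx hspos.le
        · exact (div_pos hxy hspos).le)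
      (by simp [Fin.sum_univ_three]; field_simp; rw [hs]; ring)
      (by intro i _; fin_cases i <;> exact subset_convexHull ℝ _ (by assumption))
    simpa [Fin.sum_univ_three] using this
  convert hmem using 1
  ext
  · simp only [Prod.fst_add, Prod.smul_fst, smul_eq_mul]
    field_simp
    rw [hs]; unfold orient; ring
  · simp only [Prod.snd_add, Prod.smul_snd, smul_eq_mul]
    field_simp
    rw [hs]; unfold orient; ring

/-- The angular order of `P` around the points of `Q`, which is the same for every point of `Q`,
as a rank function. -/
theorem exists_rank {P Q : Finset Pt} (hPQ : AvoidsHull P Q) (hQP : AvoidsHull Q P)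
    (hQ : 1 < Q.card) : ∃ r : Pt → ℕ, (∀ x ∈ P, r x < P.card) ∧ Set.InjOn r P ∧
      ∀ x ∈ P, ∀ y ∈ P, r x < r y → ∀ b ∈ Q, 0 < orient x y b := by
  classical
  obtain ⟨b₀, hb₀⟩ := Finset.card_pos.1 (by omega : 0 < Q.card)
  let r : Pt → ℕ := fun x => (P.filter fun y => 0 < orient y x b₀).card
  have hself : ∀ x, ¬ 0 < orient x x b₀ := by intro x; simp [orient]
  have hmono : ∀ x ∈ P, ∀ y ∈ P, 0 < orient x y b₀ → r x < r y := by
    intro x hx y hy hxy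
    apply Finset.card_lt_card
    refine (Finset.ssubset_iff_of_subset ?_).2
      ⟨x, Finset.mem_filter.2 ⟨hx, hxy⟩, fun h => hself x (Finset.mem_filter.1 h).2⟩
    intro z hz
    obtain ⟨hz, hzx⟩ := Finset.mem_filter.1 hz
    exact Finset.mem_filter.2 ⟨hz, orient_trans hQP hQ hz hx hy hb₀ hzx hxy⟩
  have htotal : ∀ x ∈ P, ∀ y ∈ P, x ≠ y → 0 < orient x y b₀ ∨ 0 < orient y x b₀ := by
    intro x hx y hy hne
    have h1 := orient_ne_zero hPQ hx hy hne (subset_convexHull ℝ _ (Finset.mem_coe.2 hb₀))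
    have h2 : orient y x b₀ = - orient x y b₀ := by unfold orient; ring
    rcases lt_or_gt_of_ne h1 with h | h
    · right; linarith
    · left; exact h
  refine ⟨r, ?_, ?_, ?_⟩
  · intro x hx
    exact Finset.card_lt_card ((Finset.ssubset_iff_of_subset (Finset.filter_subset _ _)).2
      ⟨x, hx, fun h => hself x (Finset.mem_filter.1 h).2⟩)
  · intro x hx y hy hxy
    by_contra hne
    rcases htotal x hx y hy hne with h | h
    · exact (hmono x hx y hy h).ne hxy
    · exact (hmono y hy x hx h).ne hxy.symm
  · intro x hx y hy hlt b hb
    have hne : x ≠ y := by rintro rfl; exact lt_irrefl _ hlt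
    rcases htotal x hx y hy hne with h | h
    · exact orient_pos_of_pos hPQ hx hy hb₀ hb h
    · exact absurd (hmono y hy x hx h) (by omega)

/-- If `b` lies between `a` and `c`, the three sign conditions place `a'` and `c'` strictly on one side
of the line through `a` and `c`, and `b'` strictly on the other; so `b'` is not between `a'`
and `c'`. -/
theorem no_chain {a b c a' b' c' : Pt} (h : Wbtw ℝ a b c) (h' : Wbtw ℝ a' b' c')
    (ha : 0 < orient a a' b) (hb : 0 < orient b b' a) (hc : 0 < orient c' c b) : False := by
  obtain ⟨s, ⟨hs0, hs1⟩, rfl⟩ := h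
  obtain ⟨u, ⟨hu0, hu1⟩, rfl⟩ := h'
  have e1 : orient a a' (AffineMap.lineMap a c s) = s * - orient a c a' := by
    simp [AffineMap.lineMap_apply, orient]; ring
  have e2 : orient (AffineMap.lineMap a c s) (AffineMap.lineMap a' c' u) a
      = s * ((1 - u) * orient a c a' + u * orient a c c') := by
    simp [AffineMap.lineMap_apply, orient]; ring
  have e3 : orient c' c (AffineMap.lineMap a c s) = (1 - s) * - orient a c c' := by
    simp [AffineMap.lineMap_apply, orient]; ring
  rw [e1] at ha
  rw [e2] at hb
  rw [e3] at hc
  have k1 := pos_of_mul_pos_right ha hs0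
  have k2 := pos_of_mul_pos_right hb hs0
  have k3 := pos_of_mul_pos_right hc (by linarith)
  nlinarith

/-- Linear orders on `P`, `Q`, `R` for which no two collinear triples `(p, q, r)` with middle point `q`
are strictly comparable in all three coordinates. -/
theorem exists_ranks {P Q R : Finset Pt} {n : ℕ} (hP : P.card = n) (hQ : Q.card = n)
    (hR : R.card = n) (hn : 1 < n) (hPQ : AvoidsHull P Q) (hQP : AvoidsHull Q P)
    (hRQ : AvoidsHull R Q) (hQR : AvoidsHull Q R) :
    ∃ rP rQ rR : Pt → ℕ,
      ((∀ x ∈ P, rP x < n) ∧ Set.InjOn rP P) ∧ ((∀ x ∈ Q, rQ x < n) ∧ Set.InjOn rQ Q) ∧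
      ((∀ x ∈ R, rR x < n) ∧ Set.InjOn rR R) ∧
      ∀ p ∈ P, ∀ p' ∈ P, ∀ q ∈ Q, ∀ q' ∈ Q, ∀ r ∈ R, ∀ r' ∈ R, Wbtw ℝ p q r → Wbtw ℝ p' q' r' →
        ¬ (rP p < rP p' ∧ rQ q < rQ q' ∧ rR r < rR r') := by
  obtain ⟨rP, hP1, hP2, hP3⟩ := exists_rank hPQ hQP (by omega)
  obtain ⟨rQ, hQ1, hQ2, hQ3⟩ := exists_rank hQP hPQ (by omega)
  obtain ⟨rR, hR1, hR2, hR3⟩ := exists_rank hRQ hQR (by omega)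
  rw [hP] at hP1
  rw [hQ] at hQ1
  rw [hR] at hR1
  -- the order on `R` is reversed to match the sign conditions of `no_chain`
  refine ⟨rP, rQ, fun x => n - 1 - rR x, ⟨hP1, hP2⟩, ⟨hQ1, hQ2⟩, ⟨fun x hx => by dsimp only; omega, ?_⟩, ?_⟩
  · intro x hx y hy hxy
    have := hR1 x hx
    have := hR1 y hy
    dsimp only at hxy
    exact hR2 hx hy (by omega)
  · rintro p hp p' hp' q hq q' hq' r hr r' hr' h h' ⟨h1, h2, h3⟩
    dsimp only at h3
    exact no_chain h h' (hP3 p hp p' hp' h1 q hq) (hQ3 q hq q' hq' h2 p hp)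
      (hR3 r' hr' r hr (by omega) q hq)

/-- Two points of a collinear triple determine the third. -/
theorem eq_of_collinear {P Q R : Finset Pt} (hPQ : AvoidsHull P Q) (hP : 1 < P.card)
    (hRP : AvoidsHull R P) {p q r r' : Pt} (hp : p ∈ P) (hq : q ∈ Q) (hr : r ∈ R) (hr' : r' ∈ R)
    (h : Collinear ℝ {p, q, r}) (h' : Collinear ℝ {p, q, r'}) : r = r' := by
  by_contra hne
  have hpq : p ≠ q := by
    rintro rfl
    exact not_mem_convexHull hPQ hP hp (subset_convexHull ℝ _ hq)
  have h1 : r ∈ lineThrough p q := h.mem_affineSpan_of_mem_of_ne (by simp) (by simp) (by simp) hpq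
  have h2 : r' ∈ lineThrough p q := h'.mem_affineSpan_of_mem_of_ne (by simp) (by simp) (by simp) hpq
  have hcol : Collinear ℝ {r, r', p} :=
    collinear_triple_of_mem_affineSpan_pair h1 h2 (left_mem_affineSpan_pair ℝ p q)
  exact Set.disjoint_left.1 (hRP r hr r' hr' hne)
    (hcol.mem_affineSpan_of_mem_of_ne (by simp) (by simp) (by simp) hne) (subset_convexHull ℝ _ hp)

/-! ### Conclusion -/

open SimpleGraph.TripartiteFromTriangles in
/-- Transfer of the combinatorial core along rank functions on the three coordinates. -/
theorem hasGrid_of_ranks {n : ℕ} {δ : ℝ}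
    (hcore : ∀ T : Finset (ℕ × ℕ × ℕ), ExplicitDisjoint T →
      (∀ t ∈ T, t.1 < n ∧ t.2.1 < n ∧ t.2.2 < n) →
      (∀ t ∈ T, ∀ t' ∈ T, ¬ (t.1 < t'.1 ∧ t.2.1 < t'.2.1 ∧ t.2.2 < t'.2.2)) →
      δ * (n : ℝ) ^ 2 ≤ (T.card : ℝ) → HasGrid T)
    {A B C : Finset Pt} {T : Finset (Pt × Pt × Pt)}
    (hT : ∀ t ∈ T, t.1 ∈ A ∧ t.2.1 ∈ B ∧ t.2.2 ∈ C) (hdisj : ExplicitDisjoint T)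
    {f g h : Pt → ℕ} (hf : (∀ x ∈ A, f x < n) ∧ Set.InjOn f A)
    (hg : (∀ x ∈ B, g x < n) ∧ Set.InjOn g B) (hh : (∀ x ∈ C, h x < n) ∧ Set.InjOn h C)
    (hchain : ∀ t ∈ T, ∀ t' ∈ T, ¬ (f t.1 < f t'.1 ∧ g t.2.1 < g t'.2.1 ∧ h t.2.2 < h t'.2.2))
    (hcard : δ * (n : ℝ) ^ 2 ≤ (T.card : ℝ)) : HasGrid T := by
  classical
  let F : Pt × Pt × Pt → ℕ × ℕ × ℕ := fun t => (f t.1, g t.2.1, h t.2.2)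
  have hmem : ∀ x y z, (x, y, z) ∈ T.image F →
      ∃ a b c, (a, b, c) ∈ T ∧ f a = x ∧ g b = y ∧ h c = z := by
    intro x y z hx
    obtain ⟨⟨a, b, c⟩, ht, he⟩ := Finset.mem_image.1 hx
    simp only [F, Prod.mk.injEq] at he
    exact ⟨a, b, c, ht, he⟩
  have hFinj : Set.InjOn F T := by
    rintro ⟨a, b, c⟩ ht ⟨a', b', c'⟩ ht' he
    have h₁ := hT _ ht
    have h₂ := hT _ ht'
    simp only [F, Prod.mk.injEq] at he h₁ h₂ ⊢
    exact ⟨hf.2 h₁.1 h₂.1 he.1, hg.2 h₁.2.1 h₂.2.1 he.2.1, hh.2 h₁.2.2 h₂.2.2 he.2.2⟩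
  have hfe : ∀ {a b c a' b' c'}, (a, b, c) ∈ T → (a', b', c') ∈ T → f a = f a' → a = a' :=
    fun h₁ h₂ he => hf.2 (hT _ h₁).1 (hT _ h₂).1 he
  have hge : ∀ {a b c a' b' c'}, (a, b, c) ∈ T → (a', b', c') ∈ T → g b = g b' → b = b' :=
    fun h₁ h₂ he => hg.2 (hT _ h₁).2.1 (hT _ h₂).2.1 he
  have hhe : ∀ {a b c a' b' c'}, (a, b, c) ∈ T → (a', b', c') ∈ T → h c = h c' → c = c' :=
    fun h₁ h₂ he => hh.2 (hT _ h₁).2.2 (hT _ h₂).2.2 he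
  have hdisj' : ExplicitDisjoint (T.image F) := by
    refine ⟨?_, ?_, ?_⟩
    · intro x y z x' h₁ h₂
      obtain ⟨a, b, c, k, rfl, rfl, rfl⟩ := hmem _ _ _ h₁
      obtain ⟨a', b', c', k', rfl, e₂, e₃⟩ := hmem _ _ _ h₂
      obtain rfl := hge k' k e₂
      obtain rfl := hhe k' k e₃
      rw [hdisj.inj₀ k k']
    · intro x y z x' h₁ h₂
      obtain ⟨a, b, c, k, rfl, rfl, rfl⟩ := hmem _ _ _ h₁
      obtain ⟨a', b', c', k', e₁, rfl, e₃⟩ := hmem _ _ _ h₂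
      obtain rfl := hfe k' k e₁
      obtain rfl := hhe k' k e₃
      rw [hdisj.inj₁ k k']
    · intro x y z x' h₁ h₂
      obtain ⟨a, b, c, k, rfl, rfl, rfl⟩ := hmem _ _ _ h₁
      obtain ⟨a', b', c', k', e₁, e₂, rfl⟩ := hmem _ _ _ h₂
      obtain rfl := hfe k' k e₁
      obtain rfl := hge k' k e₂
      rw [hdisj.inj₂ k k']
  obtain ⟨a₀, a₁, a₂, b₀, b₁, b₂, c₀, c₁, c₂, ⟨m₁, m₂, m₃, m₄, m₅, m₆⟩, ha, hb, hc⟩ :=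
    hcore (T.image F) hdisj'
      (by
        intro t ht
        obtain ⟨s, hs, rfl⟩ := Finset.mem_image.1 ht
        exact ⟨hf.1 _ (hT s hs).1, hg.1 _ (hT s hs).2.1, hh.1 _ (hT s hs).2.2⟩)
      (by
        intro t ht t' ht'
        obtain ⟨s, hs, rfl⟩ := Finset.mem_image.1 ht
        obtain ⟨s', hs', rfl⟩ := Finset.mem_image.1 ht'
        exact hchain s hs s' hs')
      (by rwa [Finset.card_image_of_injOn hFinj])
  obtain ⟨x₀, y₀, z₀, k₁, rfl, rfl, rfl⟩ := hmem _ _ _ m₁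
  obtain ⟨x₁, y₁, z₁, k₂, rfl, rfl, rfl⟩ := hmem _ _ _ m₂
  obtain ⟨x₂, y₂, z₂, k₃, rfl, rfl, rfl⟩ := hmem _ _ _ m₃
  have hback : ∀ {a b c b₁ c₁ a₂ c₂ a₃ b₃}, (f a, g b, h c) ∈ T.image F →
      (a, b₁, c₁) ∈ T → (a₂, b, c₂) ∈ T → (a₃, b₃, c) ∈ T → (a, b, c) ∈ T := by
    intro a b c _ _ _ _ _ _ hm j₁ j₂ j₃
    obtain ⟨x, y, z, k, e₁, e₂, e₃⟩ := hmem _ _ _ hm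
    rwa [hfe k j₁ e₁, hge k j₂ e₂, hhe k j₃ e₃] at k
  refine ⟨x₀, x₁, x₂, y₀, y₁, y₂, z₀, z₁, z₂,
    ⟨k₁, k₂, k₃, ?_, ?_, ?_⟩, ?_, ?_, ?_⟩
  · exact hback m₄ k₁ k₂ k₃
  · exact hback m₅ k₃ k₁ k₂
  · exact hback m₆ k₂ k₃ k₁
  · exact ⟨fun e => ha.1 (congrArg f e), fun e => ha.2.1 (congrArg f e),
      fun e => ha.2.2 (congrArg f e)⟩
  · exact ⟨fun e => hb.1 (congrArg g e), fun e => hb.2.1 (congrArg g e),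
      fun e => hb.2.2 (congrArg g e)⟩
  · exact ⟨fun e => hc.1 (congrArg h e), fun e => hc.2.1 (congrArg h e),
      fun e => hc.2.2 (congrArg h e)⟩

theorem exists_isTicTacToe_of_hasGrid {A B C : Finset Pt} {T : Finset (Pt × Pt × Pt)}
    (hAB : Disjoint A B) (hAC : Disjoint A C) (hBC : Disjoint B C)
    (hT : ∀ t ∈ T, t.1 ∈ A ∧ t.2.1 ∈ B ∧ t.2.2 ∈ C) (h : HasGrid T) :
    ∃ p : Fin 3 → Fin 3 → Pt, IsTicTacToe A B C (T : Set (Pt × Pt × Pt)) p := by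
  obtain ⟨a₀, a₁, a₂, b₀, b₁, b₂, c₀, c₁, c₂, ⟨m₁, m₂, m₃, m₄, m₅, m₆⟩,
    ⟨ha₁, ha₂, ha₃⟩, ⟨hb₁, hb₂, hb₃⟩, ⟨hc₁, hc₂, hc₃⟩⟩ := h
  obtain ⟨hA₀, hB₀, hC₀⟩ := hT _ m₁
  obtain ⟨hA₁, hB₁, hC₁⟩ := hT _ m₂
  obtain ⟨hA₂, hB₂, hC₂⟩ := hT _ m₃
  dsimp only at hA₀ hA₁ hA₂ hB₀ hB₁ hB₂ hC₀ hC₁ hC₂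
  have nAB : ∀ {x y}, x ∈ A → y ∈ B → x ≠ y := fun hx hy => Finset.disjoint_iff_ne.1 hAB _ hx _ hy
  have nAC : ∀ {x y}, x ∈ A → y ∈ C → x ≠ y := fun hx hy => Finset.disjoint_iff_ne.1 hAC _ hx _ hy
  have nBC : ∀ {x y}, x ∈ B → y ∈ C → x ≠ y := fun hx hy => Finset.disjoint_iff_ne.1 hBC _ hx _ hy
  refine ⟨![![a₀, b₀, c₀], ![b₁, c₁, a₁], ![c₂, a₂, b₂]], ?_, ?_, ?_, ?_⟩
  · have key : ∀ i j i' j' : Fin 3, (i, j) ≠ (i', j') →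
        (![![a₀, b₀, c₀], ![b₁, c₁, a₁], ![c₂, a₂, b₂]] : Fin 3 → Fin 3 → Pt) i j ≠
          (![![a₀, b₀, c₀], ![b₁, c₁, a₁], ![c₂, a₂, b₂]] : Fin 3 → Fin 3 → Pt) i' j' := by
      intro i j i' j' hne
      fin_cases i <;> fin_cases j <;> fin_cases i' <;> fin_cases j' <;>
        first
        | exact absurd rfl hne
        | exact nAB (by assumption) (by assumption)
        | exact nAC (by assumption) (by assumption)
        | exact nBC (by assumption) (by assumption)
        | exact (nAB (by assumption) (by assumption)).symm
        | exact (nAC (by assumption) (by assumption)).symm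
        | exact (nBC (by assumption) (by assumption)).symm
        | assumption
        | exact Ne.symm (by assumption)
    intro i j i' j' he
    by_contra hne
    exact key i j i' j' (fun h => hne (Prod.mk.inj h)) he
  · intro i j
    fin_cases i <;> fin_cases j <;> refine ⟨fun h => ?_, fun h => ?_, fun h => ?_⟩ <;>
      first
      | exact absurd h (by decide)
      | assumption
  · intro i
    fin_cases i <;> assumption
  · intro j
    fin_cases j <;> assumption

/-- For every `δ > 0` there is `n₀` such that for all `n ≥ n₀`, if `A, B, C`
are mutually avoiding `n`-point sets and `T` is ANY set of collinear triples
`(a,b,c) ∈ A × B × C` with `|T| ≥ δ n²`, then `T` contains a tic-tac-toe configuration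
all of whose six triples belong to `T`. -/
theorem statement1 :
    ∀ δ : ℝ, 0 < δ → ∃ n₀ : ℕ, ∀ n : ℕ, n₀ ≤ n →
      ∀ A B C : Finset Pt, A.card = n → B.card = n → C.card = n →
        MutuallyAvoiding A B C →
        ∀ T : Finset (Pt × Pt × Pt),
          (∀ t : Pt × Pt × Pt,
            t ∈ T → t.1 ∈ A ∧ t.2.1 ∈ B ∧ t.2.2 ∈ C ∧ Collinear ℝ {t.1, t.2.1, t.2.2}) →
          δ * (n : ℝ) ^ 2 ≤ (T.card : ℝ) →
          ∃ p : Fin 3 → Fin 3 → Pt, IsTicTacToe A B C (T : Set (Pt × Pt × Pt)) p := by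
  classical
  intro δ hδ
  obtain ⟨n₀, hcore⟩ := combinatorial_core (δ / 3) (by positivity)
  refine ⟨n₀ + 2, fun n hn A B C hA hB hC hav T hT hcard => ?_⟩
  obtain ⟨hAB, hAC, hBA, hBC, hCA, hCB⟩ := hav
  have hn1 : 1 < n := by omega
  have hdisj : ∀ {P Q : Finset Pt}, AvoidsHull P Q → P.card = n → Disjoint P Q :=
    fun {P Q} h hP => Finset.disjoint_left.2 fun x hx hx' =>
      not_mem_convexHull h (by omega) hx (subset_convexHull ℝ _ hx')
  have hmem : ∀ t ∈ T, t.1 ∈ A ∧ t.2.1 ∈ B ∧ t.2.2 ∈ C := fun t ht =>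
    ⟨(hT t ht).1, (hT t ht).2.1, (hT t ht).2.2.1⟩
  have hcol : ∀ a b c, (a, b, c) ∈ T → Collinear ℝ {a, b, c} := fun a b c h => (hT _ h).2.2.2
  have hexp : SimpleGraph.TripartiteFromTriangles.ExplicitDisjoint T := by
    refine ⟨fun a b c a' h h' => ?_, fun a b c b' h h' => ?_, fun a b c c' h h' => ?_⟩
    · have e : ∀ x : Pt, ({x, b, c} : Set Pt) = {b, c, x} := by intro x; ext; simp; tauto
      exact eq_of_collinear hBC (by omega) hAB (hmem _ h).2.1 (hmem _ h).2.2 (hmem _ h).1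
        (hmem _ h').1 (e a ▸ hcol _ _ _ h) (e a' ▸ hcol _ _ _ h')
    · have e : ∀ x : Pt, ({a, x, c} : Set Pt) = {a, c, x} := by intro x; ext; simp; tauto
      exact eq_of_collinear hAC (by omega) hBA (hmem _ h).1 (hmem _ h).2.2 (hmem _ h).2.1
        (hmem _ h').2.1 (e b ▸ hcol _ _ _ h) (e b' ▸ hcol _ _ _ h')
    · exact eq_of_collinear hAB (by omega) hCA (hmem _ h).1 (hmem _ h).2.1 (hmem _ h).2.2
        (hmem _ h').2.2 (hcol _ _ _ h) (hcol _ _ _ h')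
  have hexp' : ∀ T' ⊆ T, SimpleGraph.TripartiteFromTriangles.ExplicitDisjoint T' :=
    fun T' h => ⟨fun _ _ _ _ h₁ h₂ => hexp.inj₀ (h h₁) (h h₂),
      fun _ _ _ _ h₁ h₂ => hexp.inj₁ (h h₁) (h h₂), fun _ _ _ _ h₁ h₂ => hexp.inj₂ (h h₁) (h h₂)⟩
  -- it suffices to find the configuration in any subfamily
  have hsub : ∀ T' ⊆ T, HasGrid T' →
      ∃ p : Fin 3 → Fin 3 → Pt, IsTicTacToe A B C (T : Set (Pt × Pt × Pt)) p := by
    rintro T' hT' ⟨a₀, a₁, a₂, b₀, b₁, b₂, c₀, c₁, c₂, ⟨m₁, m₂, m₃, m₄, m₅, m₆⟩, hne⟩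
    exact exists_isTicTacToe_of_hasGrid (hdisj hAB hA) (hdisj hAC hA) (hdisj hBC hB) hmem
      ⟨a₀, a₁, a₂, b₀, b₁, b₂, c₀, c₁, c₂,
        ⟨hT' m₁, hT' m₂, hT' m₃, hT' m₄, hT' m₅, hT' m₆⟩, hne⟩
  -- split `T` according to which of the three points is the middle one
  let T₁ := T.filter fun t => Wbtw ℝ t.1 t.2.1 t.2.2
  let T₂ := T.filter fun t => Wbtw ℝ t.2.1 t.2.2 t.1
  let T₃ := T.filter fun t => Wbtw ℝ t.2.2 t.1 t.2.1
  have hs₁ : T₁ ⊆ T := Finset.filter_subset _ _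
  have hs₂ : T₂ ⊆ T := Finset.filter_subset _ _
  have hs₃ : T₃ ⊆ T := Finset.filter_subset _ _
  have hunion : T ⊆ T₁ ∪ T₂ ∪ T₃ := by
    intro t ht
    simp only [T₁, T₂, T₃, Finset.mem_union, Finset.mem_filter]
    have := (hT t ht).2.2.2.wbtw_or_wbtw_or_wbtw
    tauto
  have hle : (T.card : ℝ) ≤ T₁.card + T₂.card + T₃.card := by
    have h₁ := Finset.card_le_card hunion
    have h₂ := Finset.card_union_le (T₁ ∪ T₂) T₃
    have h₃ := Finset.card_union_le T₁ T₂
    exact_mod_cast (by omega : T.card ≤ T₁.card + T₂.card + T₃.card)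
  have hbig : δ / 3 * (n : ℝ) ^ 2 ≤ T₁.card ∨ δ / 3 * (n : ℝ) ^ 2 ≤ T₂.card ∨
      δ / 3 * (n : ℝ) ^ 2 ≤ T₃.card := by
    by_contra hcon
    push Not at hcon
    linarith
  rcases hbig with hbig | hbig | hbig
  · obtain ⟨f, g, h, hf, hg, hh, hch⟩ := exists_ranks hA hB hC hn1 hAB hBA hCB hBC
    refine hsub T₁ hs₁ (hasGrid_of_ranks (hcore n (by omega)) (fun t ht => hmem t (hs₁ ht))
      (hexp' _ hs₁) hf hg hh (fun t ht t' ht' hlt => ?_) hbig)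
    obtain ⟨h₁, h₂, h₃⟩ := hmem t (hs₁ ht)
    obtain ⟨h₁', h₂', h₃'⟩ := hmem t' (hs₁ ht')
    exact hch _ h₁ _ h₁' _ h₂ _ h₂' _ h₃ _ h₃' (Finset.mem_filter.1 ht).2
      (Finset.mem_filter.1 ht').2 hlt
  · obtain ⟨g, h, f, hg, hh, hf, hch⟩ := exists_ranks hB hC hA hn1 hBC hCB hAC hCA
    refine hsub T₂ hs₂ (hasGrid_of_ranks (hcore n (by omega)) (fun t ht => hmem t (hs₂ ht))
      (hexp' _ hs₂) hf hg hh (fun t ht t' ht' hlt => ?_) hbig)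
    obtain ⟨h₁, h₂, h₃⟩ := hmem t (hs₂ ht)
    obtain ⟨h₁', h₂', h₃'⟩ := hmem t' (hs₂ ht')
    exact hch _ h₂ _ h₂' _ h₃ _ h₃' _ h₁ _ h₁' (Finset.mem_filter.1 ht).2
      (Finset.mem_filter.1 ht').2 ⟨hlt.2.1, hlt.2.2, hlt.1⟩
  · obtain ⟨h, f, g, hh, hf, hg, hch⟩ := exists_ranks hC hA hB hn1 hCA hAC hBA hAB
    refine hsub T₃ hs₃ (hasGrid_of_ranks (hcore n (by omega)) (fun t ht => hmem t (hs₃ ht))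
      (hexp' _ hs₃) hf hg hh (fun t ht t' ht' hlt => ?_) hbig)
    obtain ⟨h₁, h₂, h₃⟩ := hmem t (hs₃ ht)
    obtain ⟨h₁', h₂', h₃'⟩ := hmem t' (hs₃ ht')
    exact hch _ h₃ _ h₃' _ h₁ _ h₁' _ h₂ _ h₂' (Finset.mem_filter.1 ht).2
      (Finset.mem_filter.1 ht').2 ⟨hlt.2.2, hlt.1, hlt.2.1⟩
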